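/- Define the weight of a real a ∈ (0,1] by w(a) = 1 if a > 1/2, w(a) = 1/2 if 1/4 < a ≤ 1/2, and w(a) = 1/4 if a ≤ 1/4. If B is a finite multiset of at most 4 reals in (0,1] whose sum is at most 1, then the total weight of the elements of B is at most 2. -/

import Mathlib

open scoped Classical
noncomputable section

/-- An input is a list of item sizes, each in (0,1]. -/
def ValidInput (L : List ℝ) : Prop := ∀ x ∈ L, 0 < x ∧ x ≤ 1

/-- A packing assigns a bin index to each item; it is feasible for cardinality
constraint `k` if every bin receives at most `k` items of total size at most 1. -/
def IsFeasible (k : ℕ) (L : List ℝ) (f : Fin L.length → ℕ) : Prop :=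
  ∀ b : ℕ,
    (Finset.univ.filter (fun i => f i = b)).card ≤ k ∧
    ∑ i ∈ Finset.univ.filter (fun i => f i = b), L.get i ≤ 1

/-- The number of bins used by a packing. -/
def binsUsed (L : List ℝ) (f : Fin L.length → ℕ) : ℕ :=
  (Finset.univ.image f).card

/-- The optimal (minimum) number of bins in a feasible packing of `L`. -/
def OPT (k : ℕ) (L : List ℝ) : ℕ :=
  sInf {n | ∃ f : Fin L.length → ℕ, IsFeasible k L f ∧ binsUsed L f = n}

/-- A deterministic online algorithm is a strategy: given the items seen so far
(ending with the item to be packed), it returns the bin index for that item. -/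
def onlinePacking (A : List ℝ → ℕ) (L : List ℝ) : Fin L.length → ℕ :=
  fun i => A (L.take (i.1 + 1))

/-- The strategy `A` is a valid online algorithm for cardinality constraint `k`
if on every valid input the induced packing is feasible. -/
def OnlineValid (k : ℕ) (A : List ℝ → ℕ) : Prop :=
  ∀ L : List ℝ, ValidInput L → IsFeasible k L (onlinePacking A L)

/-- The number of bins used by online algorithm `A` on input `L`. -/
def onlineBins (A : List ℝ → ℕ) (L : List ℝ) : ℕ :=
  binsUsed L (onlinePacking A L)

/-- The state of First Fit: a list of open bins (in order of opening),
each recorded as (number of items, total size). `ffFind` returns the index of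
the first bin that can receive an item of size `x` (it has at most `k-1` items
and the item fits); if none, the index of a new bin. -/
def ffFind (k : ℕ) (x : ℝ) : List (ℕ × ℝ) → ℕ
  | [] => 0
  | b :: bs => if b.1 < k ∧ b.2 + x ≤ 1 then 0 else ffFind k x bs + 1

/-- Update the First Fit state after packing an item of size `x`. -/
def ffUpdate (k : ℕ) (x : ℝ) : List (ℕ × ℝ) → List (ℕ × ℝ)
  | [] => [(1, x)]
  | b :: bs =>
      if b.1 < k ∧ b.2 + x ≤ 1 then (b.1 + 1, b.2 + x) :: bs
      else b :: ffUpdate k x bs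

/-- The final state of First Fit with cardinality constraint `k` on input `L`. -/
def ffState (k : ℕ) (L : List ℝ) : List (ℕ × ℝ) :=
  L.foldl (fun bs x => ffUpdate k x bs) []

/-- The number of bins used by First Fit with cardinality constraint `k` on `L`. -/
def FF (k : ℕ) (L : List ℝ) : ℕ := (ffState k L).length

/-- The bin index into which First Fit packs the `i`-th item of `L`. -/
def ffAssign (k : ℕ) (L : List ℝ) (i : Fin L.length) : ℕ :=
  ffFind k (L.get i) (ffState k (L.take i.1))

/-- The weight function for k = 4: large items (size > 1/2) weigh 1, medium items
(size in (1/4, 1/2]) weigh 1/2, small items (size ≤ 1/4) weigh 1/4. -/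
def w4 (a : ℝ) : ℝ := if 1 / 2 < a then 1 else if 1 / 4 < a then 1 / 2 else 1 / 4

/-! The number of multiples of `1 / 4` strictly between `0` and `a` is superadditive in `a ≥ 0`, and
so is the number of multiples of `1 / 2`. An item weighs at most a quarter of one plus its two
counts. A total size of at most `1` leaves room for only three multiples of `1 / 4` and one of
`1 / 2`, so a bin weighs at most a quarter of its cardinality plus `(3 + 1) / 4 = 1`. -/

section StrictFloor

variable {R : Type*} [Semiring R] [LinearOrder R] [FloorSemiring R]

/-- The number of positive integers strictly below `x`, so that `strictFloor (c * a)` counts the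
positive multiples of `1 / c` below a size `a`. Truncated subtraction makes it `0` for all `x ≤ 1`,
negative `x` included. -/
def strictFloor (x : R) : ℕ := ⌈x⌉₊ - 1

theorem strictFloor_mono : Monotone (strictFloor : R → ℕ) := fun _ _ hxy =>
  Nat.sub_le_sub_right (Nat.ceil_mono hxy) 1

theorem le_strictFloor_of_lt {n : ℕ} {x : R} (h : (n : R) < x) : n ≤ strictFloor x :=
  Nat.le_sub_one_of_lt (Nat.lt_ceil.2 h)

theorem strictFloor_lt_of_ne_zero {x : R} (h : strictFloor x ≠ 0) : (strictFloor x : R) < x :=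
  Nat.lt_ceil.1 (by unfold strictFloor at h ⊢; omega)

variable [IsStrictOrderedRing R]

theorem strictFloor_natCast (n : ℕ) : strictFloor (n : R) = n - 1 := by
  rw [strictFloor, Nat.ceil_natCast]

theorem strictFloor_add_le {x y : R} (hx : 0 ≤ x) (hy : 0 ≤ y) :
    strictFloor x + strictFloor y ≤ strictFloor (x + y) := by
  by_cases hx₀ : strictFloor x = 0
  · rw [hx₀, zero_add]
    exact strictFloor_mono (le_add_of_nonneg_left hx)
  by_cases hy₀ : strictFloor y = 0
  · rw [hy₀, add_zero]
    exact strictFloor_mono (le_add_of_nonneg_right hy)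
  apply le_strictFloor_of_lt
  push_cast
  exact add_lt_add (strictFloor_lt_of_ne_zero hx₀) (strictFloor_lt_of_ne_zero hy₀)

theorem sum_map_strictFloor_le {s : Multiset R} (hs : ∀ x ∈ s, 0 ≤ x) :
    (s.map strictFloor).sum ≤ strictFloor s.sum := by
  induction s using Multiset.induction_on with
  | empty => simp
  | cons x s ih =>
    obtain ⟨hx, hs⟩ := Multiset.forall_mem_cons.1 hs
    rw [Multiset.map_cons, Multiset.sum_cons, Multiset.sum_cons]
    calc strictFloor x + (s.map strictFloor).sum
        ≤ strictFloor x + strictFloor s.sum := Nat.add_le_add_left (ih hs) _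
      _ ≤ strictFloor (x + s.sum) := strictFloor_add_le hx (Multiset.sum_nonneg hs)

theorem sum_map_strictFloor_mul_le {s : Multiset R} {c : R} (hc : 0 ≤ c) (hs : ∀ x ∈ s, 0 ≤ x) :
    (s.map fun x => strictFloor (c * x)).sum ≤ strictFloor (c * s.sum) := by
  have hcs : ∀ y ∈ s.map (c * ·), 0 ≤ y :=
    Multiset.forall_mem_map_iff.2 fun x hx => mul_nonneg hc (hs x hx)
  have hsum : (s.map (c * ·)).sum = c * s.sum := by
    rw [Multiset.sum_map_mul_left, Multiset.map_id']
  simpa only [Multiset.map_map, Function.comp_def, hsum] using sum_map_strictFloor_le hcs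

end StrictFloor

theorem w4_le_strictFloor (a : ℝ) :
    w4 a ≤ (1 + strictFloor (2 * a) + strictFloor (4 * a)) / 4 := by
  unfold w4
  split_ifs with hlarge hmedium
  · have htwo : 1 ≤ strictFloor (2 * a) := le_strictFloor_of_lt (by push_cast; linarith)
    have hfour : 2 ≤ strictFloor (4 * a) := le_strictFloor_of_lt (by push_cast; linarith)
    rify at htwo hfour
    linarith
  · have hfour : 1 ≤ strictFloor (4 * a) := le_strictFloor_of_lt (by push_cast; linarith)
    rify at hfour
    linarith [(strictFloor (2 * a)).cast_nonneg (α := ℝ)]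
  · linarith [(strictFloor (2 * a)).cast_nonneg (α := ℝ),
      (strictFloor (4 * a)).cast_nonneg (α := ℝ)]

theorem sum_map_w4_le_strictFloor {B : Multiset ℝ} (hB : ∀ x ∈ B, 0 ≤ x) :
    (B.map w4).sum ≤
      (Multiset.card B + strictFloor (2 * B.sum) + strictFloor (4 * B.sum)) / 4 := by
  have htwo := sum_map_strictFloor_mul_le zero_le_two hB
  have hfour := sum_map_strictFloor_mul_le zero_le_four hB
  calc (B.map w4).sum
      ≤ (B.map fun a => (1 + strictFloor (2 * a) + strictFloor (4 * a) : ℝ) / 4).sum :=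
        Multiset.sum_map_le_sum_map _ _ fun a _ => w4_le_strictFloor a
    _ = (Multiset.card B + (B.map fun a => strictFloor (2 * a)).sum +
          (B.map fun a => strictFloor (4 * a)).sum) / 4 := by
        simp [Multiset.sum_map_div, Multiset.sum_map_add, Nat.cast_multiset_sum, Multiset.map_map]
    _ ≤ (Multiset.card B + strictFloor (2 * B.sum) + strictFloor (4 * B.sum)) / 4 := by
        gcongr

theorem weight_bin_le_two_general {B : Multiset ℝ} (hB : ∀ x ∈ B, 0 ≤ x) (hsum : B.sum ≤ 1) :
    (B.map w4).sum ≤ 1 + Multiset.card B / 4 := by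
  have htwo : strictFloor (2 * B.sum) ≤ 1 :=
    (strictFloor_mono (by push_cast; linarith)).trans_eq (strictFloor_natCast 2)
  have hfour : strictFloor (4 * B.sum) ≤ 3 :=
    (strictFloor_mono (by push_cast; linarith)).trans_eq (strictFloor_natCast 4)
  rify at htwo hfour
  linarith [sum_map_w4_le_strictFloor hB]

/-- If `B` is a multiset of at most 4 reals in (0,1] with sum at most 1,
then the total weight of its elements is at most 2. -/
theorem weight_bin_le_two (B : Multiset ℝ) (hB : ∀ x ∈ B, 0 < x ∧ x ≤ 1)
    (hcard : Multiset.card B ≤ 4) (hsum : B.sum ≤ 1) :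
    (B.map w4).sum ≤ 2 := by
  have hcard_real : (Multiset.card B : ℝ) ≤ 4 := mod_cast hcard
  linarith [weight_bin_le_two_general (fun x hx => (hB x hx).1.le) hsum]
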